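/- Let m ≥ 1 and λ ∈ (0, 2). For all u, v ∈ ℝ^m, one has g(u,v) = Σ_{i=1}^m (u_i + v_i − 1)^2 + λ·(Σ_{i=1}^m (|u_i| + |v_i|) − √(Σ_{i=1}^m (u_i^2 + v_i^2))) ≥ g*(λ), and equality holds if and only if (u_i, v_i) = (c(λ), 0) or (u_i, v_i) = (0, c(λ)) for every i ∈ [m]. In particular, the global minimum of g over ℝ^m × ℝ^m is g*(λ) and its set of minimizers is Y*. -/

import Mathlib

/-!
Write `φ(x) = ‖x‖₁ - ‖x‖₂`, so that `g(u, v) = ‖u + v - 1‖² + λ φ(u, v)`. Merging each pair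
`(uᵢ, vᵢ)` into `(uᵢ + vᵢ, 0)` keeps the quadratic term and lowers `‖·‖₁` by some `D ≥ 0`. Since
`‖(u, v)‖₂² ≤ (‖u + v‖₂ + D)² - D² / 2`, it lowers `‖·‖₂` by at most `D`, so `φ` does not increase,
and `φ` is unchanged exactly when `uᵢ vᵢ = 0` for all `i`. What remains is to minimize
`f(x) = ‖x - 1‖² + λ φ(x)` over `x ∈ ℝⁿ`. There an explicit identity writes `f(x) - n (1 - c²)`, up
to the positive factor `2 √n c`, as a nonnegative combination of `‖x - c‖²`, `(‖x‖₂ - √n c)²` and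
`∑ (|xᵢ| - xᵢ)`, all three of which vanish at the constant vector `c`.
-/

/-- The amount by which cancellation between `a` and `b` makes the triangle inequality strict; it
measures what `‖·‖₁` loses when a pair is merged into its sum. -/
def absExcess (a b : ℝ) : ℝ := |a| + |b| - |a + b|

lemma absExcess_nonneg (a b : ℝ) : 0 ≤ absExcess a b := sub_nonneg.2 (abs_add_le a b)

lemma absExcess_mul_eq (a b : ℝ) :
    absExcess a b * (|a + b| + absExcess a b / 2) = |a * b| - a * b := by
  rw [absExcess, abs_mul]
  linear_combination (sq_abs a + sq_abs b - sq_abs (a + b)) / 2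

lemma mul_nonneg_of_absExcess_eq_zero {a b : ℝ} (h : absExcess a b = 0) : 0 ≤ a * b := by
  have habs : |a * b| - a * b = 0 := by rw [← absExcess_mul_eq, h, zero_mul]
  exact abs_eq_self.1 (sub_eq_zero.1 habs)

lemma absExcess_eq_zero_of_mul_eq_zero {a b : ℝ} (h : a * b = 0) : absExcess a b = 0 := by
  rcases mul_eq_zero.1 h with rfl | rfl <;> simp [absExcess]

lemma mul_eq_zero_and_add_eq_iff {R : Type*} [NonUnitalNonAssocSemiring R] [NoZeroDivisors R]
    {a b c : R} : a * b = 0 ∧ a + b = c ↔ (a = c ∧ b = 0) ∨ (a = 0 ∧ b = c) := by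
  constructor
  · rintro ⟨hmul, hadd⟩
    rcases mul_eq_zero.1 hmul with rfl | rfl
    · exact .inr ⟨rfl, by simpa using hadd⟩
    · exact .inl ⟨by simpa using hadd, rfl⟩
  · rintro (⟨rfl, rfl⟩ | ⟨rfl, rfl⟩) <;> simp

section SumsOfSquares

variable {ι R : Type*} [Fintype ι] [CommRing R]

lemma sum_sq_add_sq (u v : ι → R) :
    ∑ i, (u i ^ 2 + v i ^ 2) = ∑ i, (u i + v i) ^ 2 - 2 * ∑ i, u i * v i := by
  rw [Finset.mul_sum, ← Finset.sum_sub_distrib]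
  exact Finset.sum_congr rfl fun i _ => by ring

lemma sum_sub_const_sq (x : ι → R) (a : R) :
    ∑ i, (x i - a) ^ 2 = ∑ i, x i ^ 2 - 2 * a * ∑ i, x i + Fintype.card ι * a ^ 2 := by
  simp only [sub_sq, Finset.sum_add_distrib, Finset.sum_sub_distrib, ← Finset.mul_sum,
    Finset.sum_const, Finset.card_univ, nsmul_eq_mul, mul_right_comm 2 _ a]

end SumsOfSquares

section L1SubL2

variable {ι : Type*} [Fintype ι]

/-- The `ℓ¹ - ℓ²` sparsity penalty `‖x‖₁ - ‖x‖₂`, written out with sums because `ι → ℝ` carries the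
sup norm. -/
noncomputable def l1SubL2 (x : ι → ℝ) : ℝ := ∑ i, |x i| - √(∑ i, x i ^ 2)

lemma l1SubL2_sumElim (u v : ι → ℝ) :
    l1SubL2 (Sum.elim u v) = ∑ i, (|u i| + |v i|) - √(∑ i, (u i ^ 2 + v i ^ 2)) := by
  simp [l1SubL2, Finset.sum_add_distrib]

lemma l1SubL2_sumElim_sub_l1SubL2_add (u v : ι → ℝ) :
    l1SubL2 (Sum.elim u v) - l1SubL2 (u + v) =
      √(∑ i, (u i + v i) ^ 2) + ∑ i, absExcess (u i) (v i) - √(∑ i, (u i ^ 2 + v i ^ 2)) := by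
  rw [l1SubL2_sumElim]
  simp only [l1SubL2, absExcess, Pi.add_apply, Finset.sum_sub_distrib]
  ring

lemma neg_two_mul_sum_mul_le (u v : ι → ℝ) :
    -(2 * ∑ i, u i * v i) ≤ (∑ i, absExcess (u i) (v i)) *
      (√(∑ i, (u i + v i) ^ 2) + (∑ i, absExcess (u i) (v i)) / 2) := by
  rw [Finset.mul_sum, ← Finset.sum_neg_distrib, Finset.sum_mul]
  refine Finset.sum_le_sum fun i hi => ?_
  have habs_le : |u i + v i| ≤ √(∑ j, (u j + v j) ^ 2) :=
    Real.abs_le_sqrt (Finset.single_le_sum (f := fun j => (u j + v j) ^ 2)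
      (fun j _ => sq_nonneg _) hi)
  have hexcess_le : absExcess (u i) (v i) ≤ ∑ j, absExcess (u j) (v j) :=
    Finset.single_le_sum (f := fun j => absExcess (u j) (v j))
      (fun j _ => absExcess_nonneg _ _) hi
  calc -(2 * (u i * v i)) ≤ |u i * v i| - u i * v i := by linarith [neg_le_abs (u i * v i)]
    _ = absExcess (u i) (v i) * (|u i + v i| + absExcess (u i) (v i) / 2) :=
      (absExcess_mul_eq _ _).symm
    _ ≤ _ := mul_le_mul_of_nonneg_left (by gcongr) (absExcess_nonneg _ _)

lemma sum_sq_add_sq_le (u v : ι → ℝ) :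
    ∑ i, (u i ^ 2 + v i ^ 2) ≤
      (√(∑ i, (u i + v i) ^ 2) + ∑ i, absExcess (u i) (v i)) ^ 2
        - (∑ i, absExcess (u i) (v i)) ^ 2 / 2 := by
  have hexcess_nonneg : 0 ≤ ∑ i, absExcess (u i) (v i) :=
    Finset.sum_nonneg fun i _ => absExcess_nonneg _ _
  have hnorm_sq : √(∑ i, (u i + v i) ^ 2) ^ 2 = ∑ i, (u i + v i) ^ 2 := Real.sq_sqrt (by positivity)
  linarith [sum_sq_add_sq u v, neg_two_mul_sum_mul_le u v,
    mul_nonneg (Real.sqrt_nonneg (∑ i, (u i + v i) ^ 2)) hexcess_nonneg]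

lemma l1SubL2_add_le_l1SubL2_sumElim (u v : ι → ℝ) :
    l1SubL2 (u + v) ≤ l1SubL2 (Sum.elim u v) := by
  rw [← sub_nonneg, l1SubL2_sumElim_sub_l1SubL2_add, sub_nonneg]
  have hexcess_nonneg : 0 ≤ ∑ i, absExcess (u i) (v i) :=
    Finset.sum_nonneg fun i _ => absExcess_nonneg _ _
  exact Real.sqrt_le_iff.2 ⟨by positivity,
    (sum_sq_add_sq_le u v).trans (sub_le_self _ (by positivity))⟩

lemma mul_eq_zero_of_l1SubL2_sumElim_eq {u v : ι → ℝ}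
    (h : l1SubL2 (Sum.elim u v) = l1SubL2 (u + v)) (i : ι) : u i * v i = 0 := by
  have hsqrt : √(∑ i, (u i ^ 2 + v i ^ 2)) =
      √(∑ i, (u i + v i) ^ 2) + ∑ i, absExcess (u i) (v i) := by
    linarith [l1SubL2_sumElim_sub_l1SubL2_add u v]
  have hexcess_sum : ∑ i, absExcess (u i) (v i) = 0 := by
    have hle := sum_sq_add_sq_le u v
    rw [← hsqrt, Real.sq_sqrt (by positivity)] at hle
    exact pow_eq_zero_iff two_ne_zero |>.1 (le_antisymm (by linarith) (sq_nonneg _))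
  have hexcess : ∀ j, absExcess (u j) (v j) = 0 := fun j =>
    (Finset.sum_eq_zero_iff_of_nonneg fun _ _ => absExcess_nonneg _ _).1 hexcess_sum j
      (Finset.mem_univ j)
  have hprod_sum : ∑ j, u j * v j = 0 := by
    rw [hexcess_sum, add_zero, Real.sqrt_inj (by positivity) (by positivity)] at hsqrt
    linarith [sum_sq_add_sq u v]
  exact (Finset.sum_eq_zero_iff_of_nonneg fun j _ =>
    mul_nonneg_of_absExcess_eq_zero (hexcess j)).1 hprod_sum i (Finset.mem_univ i)

lemma l1SubL2_sumElim_eq_iff {u v : ι → ℝ} :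
    l1SubL2 (Sum.elim u v) = l1SubL2 (u + v) ↔ ∀ i, u i * v i = 0 := by
  refine ⟨mul_eq_zero_of_l1SubL2_sumElim_eq, fun h => ?_⟩
  rw [← sub_eq_zero, l1SubL2_sumElim_sub_l1SubL2_add, sum_sq_add_sq]
  simp [h, absExcess_eq_zero_of_mul_eq_zero]

end L1SubL2

section PenalizedLoss

variable {ι : Type*} [Fintype ι] {lam : ℝ}

/-- Least squares for the all-ones vector with `ℓ¹ - ℓ²` penalty: the function to which merging each
pair `(uᵢ, vᵢ)` into its sum reduces `g`. -/
noncomputable def penalizedLoss (lam : ℝ) (x : ι → ℝ) : ℝ :=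
  ∑ i, (x i - 1) ^ 2 + lam * l1SubL2 x

/-- The number `c(λ)`, the common coordinate of the minimizer of `penalizedLoss lam` on `ι → ℝ`.
For empty `ι` the division by `√0` makes it a junk value. -/
noncomputable def minimizerCoord (ι : Type*) [Fintype ι] (lam : ℝ) : ℝ :=
  (lam / √(Fintype.card ι) - lam + 2) / 2

lemma minimizerCoord_pos (hlam0 : 0 ≤ lam) (hlam2 : lam < 2) : 0 < minimizerCoord ι lam := by
  have : 0 ≤ lam / √(Fintype.card ι) := by positivity
  rw [minimizerCoord]
  linarith

lemma mul_penalizedLoss_sub_eq (x : ι → ℝ) {s c : ℝ} (hs : s ^ 2 = Fintype.card ι)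
    (hc : 2 * s * c = (2 - lam) * s + lam) :
    2 * s * c * (penalizedLoss lam x - Fintype.card ι * (1 - c ^ 2)) =
      (2 - lam) * s * ∑ i, (x i - c) ^ 2 + lam * (√(∑ i, x i ^ 2) - s * c) ^ 2
        + 2 * s * c * lam * ∑ i, (|x i| - x i) := by
  have hnorm_sq : √(∑ i, x i ^ 2) ^ 2 = ∑ i, x i ^ 2 := Real.sq_sqrt (by positivity)
  rw [penalizedLoss, l1SubL2, sum_sub_const_sq, sum_sub_const_sq, Finset.sum_sub_distrib, ← hs]
  linear_combination (∑ i, x i ^ 2 + s ^ 2 * c ^ 2) * hc - lam * hnorm_sq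

variable [Nonempty ι]

lemma two_mul_sqrt_mul_minimizerCoord (lam : ℝ) :
    2 * √(Fintype.card ι) * minimizerCoord ι lam = (2 - lam) * √(Fintype.card ι) + lam := by
  have hs : √(Fintype.card ι : ℝ) ≠ 0 := by positivity
  rw [minimizerCoord]
  field_simp
  ring

lemma card_mul_one_sub_minimizerCoord_sq (lam : ℝ) :
    Fintype.card ι * (1 - minimizerCoord ι lam ^ 2) =
      lam * ((1 - lam / 4) * Fintype.card ι + (lam / 2 - 1) * √(Fintype.card ι) - lam / 4) := by
  have hs : √(Fintype.card ι : ℝ) ^ 2 = Fintype.card ι := Real.sq_sqrt (Nat.cast_nonneg _)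
  have hc := congrArg (· ^ 2) (two_mul_sqrt_mul_minimizerCoord (ι := ι) lam)
  linear_combination (minimizerCoord ι lam ^ 2 - (2 - lam) ^ 2 / 4) * hs - hc / 4

lemma sum_sub_minimizerCoord_sq_le (hlam0 : 0 ≤ lam) (hlam2 : lam < 2) (x : ι → ℝ) :
    (2 - lam) * ∑ i, (x i - minimizerCoord ι lam) ^ 2 ≤
      2 * minimizerCoord ι lam *
        (penalizedLoss lam x - Fintype.card ι * (1 - minimizerCoord ι lam ^ 2)) := by
  have hs : 0 < √(Fintype.card ι : ℝ) := by positivity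
  have hc := minimizerCoord_pos (ι := ι) hlam0 hlam2
  have hidentity := mul_penalizedLoss_sub_eq x (Real.sq_sqrt (Nat.cast_nonneg _))
    (two_mul_sqrt_mul_minimizerCoord lam)
  have habs_sub : 0 ≤ ∑ i, (|x i| - x i) :=
    Finset.sum_nonneg fun i _ => sub_nonneg.2 (le_abs_self _)
  have hrest : 0 ≤ lam * (√(∑ i, x i ^ 2) - √(Fintype.card ι) * minimizerCoord ι lam) ^ 2
      + 2 * √(Fintype.card ι) * minimizerCoord ι lam * lam * ∑ i, (|x i| - x i) := by positivity
  refine le_of_mul_le_mul_left ?_ hs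
  linarith

lemma penalizedLoss_const_minimizerCoord (hlam0 : 0 ≤ lam) (hlam2 : lam < 2) :
    penalizedLoss lam (fun _ : ι => minimizerCoord ι lam) =
      Fintype.card ι * (1 - minimizerCoord ι lam ^ 2) := by
  have hc := minimizerCoord_pos (ι := ι) hlam0 hlam2
  have hs : √(Fintype.card ι : ℝ) ^ 2 = Fintype.card ι := Real.sq_sqrt (Nat.cast_nonneg _)
  simp only [penalizedLoss, l1SubL2, Finset.sum_const, Finset.card_univ, nsmul_eq_mul,
    abs_of_pos hc, Real.sqrt_mul (Nat.cast_nonneg _), Real.sqrt_sq hc.le]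
  rw [← hs, Real.sqrt_sq (Real.sqrt_nonneg _)]
  linear_combination √(Fintype.card ι) * minimizerCoord ι lam *
    two_mul_sqrt_mul_minimizerCoord (ι := ι) lam

lemma le_penalizedLoss (hlam0 : 0 ≤ lam) (hlam2 : lam < 2) (x : ι → ℝ) :
    Fintype.card ι * (1 - minimizerCoord ι lam ^ 2) ≤ penalizedLoss lam x := by
  have hc := minimizerCoord_pos (ι := ι) hlam0 hlam2
  have hdist : 0 ≤ (2 - lam) * ∑ i, (x i - minimizerCoord ι lam) ^ 2 :=
    mul_nonneg (by linarith) (by positivity)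
  exact sub_nonneg.1 (nonneg_of_mul_nonneg_right
    (hdist.trans (sum_sub_minimizerCoord_sq_le hlam0 hlam2 x)) (by positivity))

lemma penalizedLoss_eq_iff (hlam0 : 0 ≤ lam) (hlam2 : lam < 2) {x : ι → ℝ} :
    penalizedLoss lam x = Fintype.card ι * (1 - minimizerCoord ι lam ^ 2) ↔
      ∀ i, x i = minimizerCoord ι lam := by
  refine ⟨fun h i => ?_, fun h => ?_⟩
  · have hle := sum_sub_minimizerCoord_sq_le hlam0 hlam2 x
    rw [h, sub_self, mul_zero] at hle
    have hsum : ∑ j, (x j - minimizerCoord ι lam) ^ 2 = 0 :=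
      le_antisymm (nonpos_of_mul_nonpos_right hle (by linarith)) (by positivity)
    have hi := (Finset.sum_eq_zero_iff_of_nonneg fun _ _ => sq_nonneg _).1 hsum i
      (Finset.mem_univ i)
    exact sub_eq_zero.1 (pow_eq_zero_iff two_ne_zero |>.1 hi)
  · rw [funext h, penalizedLoss_const_minimizerCoord hlam0 hlam2]

end PenalizedLoss

theorem g_min_unconstrained_general {ι : Type*} [Fintype ι] [Nonempty ι] {lam : ℝ}
    (hlam0 : 0 < lam) (hlam2 : lam < 2) (u v : ι → ℝ) :
    Fintype.card ι * (1 - minimizerCoord ι lam ^ 2) ≤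
        ∑ i, (u i + v i - 1) ^ 2 + lam * l1SubL2 (Sum.elim u v) ∧
      (∑ i, (u i + v i - 1) ^ 2 + lam * l1SubL2 (Sum.elim u v) =
          Fintype.card ι * (1 - minimizerCoord ι lam ^ 2) ↔
        ∀ i, (u i = minimizerCoord ι lam ∧ v i = 0) ∨
          (u i = 0 ∧ v i = minimizerCoord ι lam)) := by
  have hmerge : penalizedLoss lam (u + v) ≤
      ∑ i, (u i + v i - 1) ^ 2 + lam * l1SubL2 (Sum.elim u v) :=
    add_le_add_right (mul_le_mul_of_nonneg_left (l1SubL2_add_le_l1SubL2_sumElim u v) hlam0.le) _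
  have hmerge_eq : ∑ i, (u i + v i - 1) ^ 2 + lam * l1SubL2 (Sum.elim u v) =
      penalizedLoss lam (u + v) ↔ ∀ i, u i * v i = 0 := by
    rw [← l1SubL2_sumElim_eq_iff]
    exact (add_right_inj _).trans (mul_right_inj' hlam0.ne')
  have hle := le_penalizedLoss hlam0.le hlam2 (u + v)
  have hle_eq : penalizedLoss lam (u + v) = Fintype.card ι * (1 - minimizerCoord ι lam ^ 2) ↔
      ∀ i, u i + v i = minimizerCoord ι lam := penalizedLoss_eq_iff hlam0.le hlam2
  refine ⟨hle.trans hmerge, ?_⟩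
  simp_rw [← mul_eq_zero_and_add_eq_iff, forall_and]
  rw [← hmerge_eq, ← hle_eq]
  exact ⟨fun h => ⟨by linarith, by linarith⟩, fun ⟨h₁, h₂⟩ => h₁.trans h₂⟩

/-- For `λ ∈ (0,2)` and all `u, v ∈ ℝᵐ`,
`g(u,v) = ∑(uᵢ+vᵢ−1)² + λ(∑(|uᵢ|+|vᵢ|) − √(∑(uᵢ²+vᵢ²))) ≥ g*(λ)`, with equality iff
`(uᵢ, vᵢ) = (c(λ), 0)` or `(0, c(λ))` for every `i` (so the minimizer set is `Y*`). -/
theorem g_min_unconstrained (m : ℕ) (hm : 1 ≤ m) (lam : ℝ)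
    (hlam0 : 0 < lam) (hlam2 : lam < 2)
    (c gstar : ℝ)
    (hc : c = (lam / Real.sqrt m - lam + 2) / 2)
    (hgstar : gstar = lam * ((1 - lam / 4) * m + (lam / 2 - 1) * Real.sqrt m - lam / 4))
    (g : (Fin m → ℝ) → (Fin m → ℝ) → ℝ)
    (hg : ∀ u v, g u v = (∑ i, (u i + v i - 1) ^ 2)
      + lam * ((∑ i, (|u i| + |v i|)) - Real.sqrt (∑ i, (u i ^ 2 + v i ^ 2)))) :
    ∀ u v : Fin m → ℝ,
      gstar ≤ g u v ∧
      (g u v = gstar ↔ ∀ i, (u i = c ∧ v i = 0) ∨ (u i = 0 ∧ v i = c)) := by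
  have : Nonempty (Fin m) := ⟨⟨0, hm⟩⟩
  intro u v
  have hmin := g_min_unconstrained_general hlam0 hlam2 u v
  rw [card_mul_one_sub_minimizerCoord_sq, l1SubL2_sumElim, minimizerCoord, Fintype.card_fin,
    ← hg, ← hgstar, ← hc] at hmin
  exact hmin
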